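/- arXiv:0909.3942 — 2 statements merged into one kernel-verified Lean document; each statement's English description precedes it below -/
import Mathlib

section
/- For any field K, the group PGL₂(K) is isomorphic to the special orthogonal group SO(K, q) of the ternary quadratic form q(x,y,z) = x² + yz, via the action of PGL₂(K) by conjugation on trace-zero 2×2 matrices (for char K ≠ 2) / on the quotient of M₂(K) by scalars. -/
/-!
Conjugation by `A = [[a, b], [c, d]]` on the trace-zero matrices `[[x, y], [z, -x]]` is given, in the
coordinates `(x, y, z)`, by a matrix `conjMat A` whose entries are quadratic in `a, b, c, d`, divided
by `det A`. It makes sense and is multiplicative over every field, it preserves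
`q = -det`, it has determinant `1`, and its kernel consists of the scalar matrices, so it
induces an injection of `PGL₂(K)` into `SO(K, q)`.

For surjectivity, let `g ∈ SO(K, q)` have columns `u₀, u₁, u₂`. The vectors `u₁, u₂` are isotropic with
polar pairing `1`, and explicit polynomial formulas in their coordinates give an `A` for which
`conjMat A` has the same last two columns (`exists_conjMat_columns`). The first column is then
determined by being orthogonal to `u₁` and `u₂` for the polar form and by the determinant: this
linear system has determinant `-1`, the Gram determinant of `u₁, u₂` (`first_column_unique`).
No step divides by `2`, so all characteristics are treated at once, although the polar
form is degenerate in characteristic `2`.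
-/

/-- `PGL₂(K)`: `GL₂(K)` modulo its center (the scalar matrices). -/
abbrev PGL2 (K : Type*) [Field K] :=
  GL (Fin 2) K ⧸ Subgroup.center (GL (Fin 2) K)

/-- The ternary quadratic form `q(x,y,z) = x² + yz`. -/
def qForm {K : Type*} [Field K] (v : Fin 3 → K) : K := v 0 ^ 2 + v 1 * v 2

/-- Coordinates `(x,y,z)` viewed as the trace-zero matrix `[[x, y],[z, −x]]`. -/
def traceZeroMat {K : Type*} [Field K] (v : Fin 3 → K) : Matrix (Fin 2) (Fin 2) K :=
  !![v 0, v 1; v 2, -(v 0)]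

/-- The matrix, in the coordinates of `traceZeroMat`, of `X ↦ A * X * A⁻¹` on trace-zero matrices. -/
def conjMat {K : Type*} [Field K] (A : Matrix (Fin 2) (Fin 2) K) : Matrix (Fin 3) (Fin 3) K :=
  (A.det)⁻¹ •
    !![A 0 0 * A 1 1 + A 0 1 * A 1 0, -(A 0 0 * A 1 0), A 0 1 * A 1 1;
       -(2 * A 0 0 * A 0 1), A 0 0 ^ 2, -(A 0 1 ^ 2);
       2 * A 1 0 * A 1 1, -(A 1 0 ^ 2), A 1 1 ^ 2]

/-- The polar form `q(v + w) - q(v) - q(w)` of `q = x² + yz`. -/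
def qPolar {K : Type*} [Field K] (v w : Fin 3 → K) : K :=
  2 * v 0 * w 0 + v 1 * w 2 + v 2 * w 1

lemma conjMat_one {K : Type*} [Field K] : conjMat (1 : Matrix (Fin 2) (Fin 2) K) = 1 := by
  ext i j
  fin_cases i <;> fin_cases j <;> simp [conjMat]

lemma conjMat_mul {K : Type*} [Field K] (A B : Matrix (Fin 2) (Fin 2) K) :
    conjMat (A * B) = conjMat A * conjMat B := by
  ext i j
  unfold conjMat
  rw [Matrix.det_mul, mul_inv, Matrix.smul_mul, Matrix.mul_smul, smul_smul]
  simp only [Matrix.smul_apply, smul_eq_mul]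
  congr 1
  fin_cases i <;> fin_cases j <;>
    simp [Matrix.mul_apply, Fin.sum_univ_two, Fin.sum_univ_three] <;> ring

/-- The conjugation action of `GL₂(K)` on trace-zero matrices, as a homomorphism to `GL₃(K)`. -/
def conjHom (K : Type*) [Field K] : GL (Fin 2) K →* GL (Fin 3) K :=
  MonoidHom.toHomUnits
    { toFun := fun A => conjMat (A : Matrix (Fin 2) (Fin 2) K)
      map_one' := by simpa using conjMat_one
      map_mul' := fun A B => by simpa using conjMat_mul (A : Matrix (Fin 2) (Fin 2) K) B }

lemma coe_conjHom {K : Type*} [Field K] (A : GL (Fin 2) K) :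
    (conjHom K A : Matrix (Fin 3) (Fin 3) K) = conjMat (A : Matrix (Fin 2) (Fin 2) K) := rfl

lemma conjMat_det {K : Type*} [Field K] (A : Matrix (Fin 2) (Fin 2) K) (hA : A.det ≠ 0) :
    (conjMat A).det = 1 := by
  unfold conjMat
  rw [Matrix.det_smul, Matrix.det_fin_three, Fintype.card_fin, inv_pow,
    inv_mul_eq_one₀ (pow_ne_zero 3 hA), Matrix.det_fin_two]
  simp
  ring

lemma qForm_conjMat {K : Type*} [Field K] (A : Matrix (Fin 2) (Fin 2) K) (hA : A.det ≠ 0)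
    (v : Fin 3 → K) : qForm ((conjMat A).mulVec v) = qForm v := by
  have h := mul_inv_cancel₀ hA
  unfold conjMat qForm
  generalize A.det⁻¹ = e at *
  rw [Matrix.det_fin_two] at h
  simp [Matrix.mulVec, dotProduct, Fin.sum_univ_three]
  linear_combination (v 0 ^ 2 + v 1 * v 2) * ((A 0 0 * A 1 1 - A 0 1 * A 1 0) * e + 1) * h

lemma traceZeroMat_conjMat {K : Type*} [Field K] (A : GL (Fin 2) K) (v : Fin 3 → K) :
    traceZeroMat ((conjMat (A : Matrix (Fin 2) (Fin 2) K)).mulVec v)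
      = (A : Matrix (Fin 2) (Fin 2) K) * traceZeroMat v *
        ((A⁻¹ : GL (Fin 2) K) : Matrix (Fin 2) (Fin 2) K) := by
  rw [Matrix.coe_units_inv, Matrix.inv_def, Ring.inverse_eq_inv', Matrix.adjugate_fin_two]
  unfold conjMat
  generalize (A : Matrix (Fin 2) (Fin 2) K) = B
  generalize B.det⁻¹ = e
  ext i j
  fin_cases i <;> fin_cases j <;>
    simp [traceZeroMat, Matrix.mulVec, dotProduct, Fin.sum_univ_three, Matrix.mul_apply,
      Fin.sum_univ_two] <;> ring

lemma mem_center_iff_entries {K : Type*} [Field K] (A : GL (Fin 2) K) :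
    A ∈ Subgroup.center (GL (Fin 2) K) ↔ A 0 1 = 0 ∧ A 1 0 = 0 ∧ A 0 0 = A 1 1 := by
  rw [Matrix.GeneralLinearGroup.mem_center_iff_val_mem_range_scalar]
  constructor
  · rintro ⟨t, ht⟩
    simp [← ht]
  · rintro ⟨h01, h10, h00⟩
    refine ⟨A 0 0, ?_⟩
    ext i j
    fin_cases i <;> fin_cases j <;> simp [h01, h10, h00]

lemma ker_conjHom (K : Type*) [Field K] :
    (conjHom K).ker = Subgroup.center (GL (Fin 2) K) := by
  ext A
  rw [MonoidHom.mem_ker, mem_center_iff_entries, Units.ext_iff, coe_conjHom]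
  have hD : (A : Matrix (Fin 2) (Fin 2) K).det ≠ 0 := A.isUnit.map Matrix.detMonoidHom |>.ne_zero
  generalize (A : Matrix (Fin 2) (Fin 2) K) = B at *
  have h := mul_inv_cancel₀ hD
  have he := inv_ne_zero hD
  constructor
  · intro hB
    have h00 := congrFun (congrFun hB 0) 0
    have h11 := congrFun (congrFun hB 1) 1
    have h12 := congrFun (congrFun hB 1) 2
    have h21 := congrFun (congrFun hB 2) 1
    simp [conjMat, hD] at h00 h11 h12 h21
    have ha : B 0 0 ≠ 0 := by
      intro h0
      simp [h0] at h11
    refine ⟨h12, h21, ?_⟩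
    rw [h12] at h00
    apply mul_left_cancel₀ ha
    apply mul_left_cancel₀ he
    linear_combination h11 - h00
  · rintro ⟨h01, h10, h00⟩
    rw [Matrix.det_fin_two] at h
    ext i j
    unfold conjMat
    rw [Matrix.det_fin_two]
    fin_cases i <;> fin_cases j <;> simp [h01, h10, h00] <;>
      (simp [h01, h10, h00] at h; try linear_combination h)

/-- The columns of a matrix preserving `q` satisfy the same relations as the standard basis. -/
lemma column_relations {K : Type*} [Field K] (g : Matrix (Fin 3) (Fin 3) K)
    (hg : ∀ v : Fin 3 → K, qForm (g.mulVec v) = qForm v) :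
    qForm (g.col 1) = 0 ∧ qForm (g.col 2) = 0 ∧ qPolar (g.col 1) (g.col 2) = 1 ∧
      qPolar (g.col 1) (g.col 0) = 0 ∧ qPolar (g.col 2) (g.col 0) = 0 := by
  have h0 := hg ![1, 0, 0]
  have h1 := hg ![0, 1, 0]
  have h2 := hg ![0, 0, 1]
  have h12 := hg ![0, 1, 1]
  have h01 := hg ![1, 1, 0]
  have h02 := hg ![1, 0, 1]
  simp [qForm, Matrix.mulVec, dotProduct, Fin.sum_univ_three] at h0 h1 h2 h12 h01 h02
  simp only [qForm, qPolar, Matrix.col_apply]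
  refine ⟨h1, h2, ?_, ?_, ?_⟩
  · linear_combination h12 - h1 - h2
  · linear_combination h01 - h0 - h1
  · linear_combination h02 - h0 - h2

/-- A matrix of determinant `1` preserving `q` is determined by its last two columns. -/
lemma first_column_unique {K : Type*} [Field K] (g h : Matrix (Fin 3) (Fin 3) K)
    (hg : ∀ v : Fin 3 → K, qForm (g.mulVec v) = qForm v)
    (hh : ∀ v : Fin 3 → K, qForm (h.mulVec v) = qForm v)
    (hgd : g.det = 1) (hhd : h.det = 1)
    (h1 : ∀ i, h i 1 = g i 1) (h2 : ∀ i, h i 2 = g i 2) : h = g := by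
  obtain ⟨p1, p2, p12, p10, p20⟩ := column_relations g hg
  obtain ⟨-, -, -, r10, r20⟩ := column_relations h hh
  rw [Matrix.det_fin_three] at hgd hhd
  simp only [qForm, qPolar, Matrix.col_apply, h1, h2] at p1 p2 p12 p10 p20 r10 r20 hhd
  -- The rows are the polar form against the two columns, and the cross product of those columns.
  have hP : (!![2 * g 0 1, g 2 1, g 1 1;
                2 * g 0 2, g 2 2, g 1 2;
                g 1 1 * g 2 2 - g 2 1 * g 1 2, g 2 1 * g 0 2 - g 0 1 * g 2 2,
                  g 0 1 * g 1 2 - g 1 1 * g 0 2]).det ≠ 0 := by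
    have : (!![2 * g 0 1, g 2 1, g 1 1;
                2 * g 0 2, g 2 2, g 1 2;
                g 1 1 * g 2 2 - g 2 1 * g 1 2, g 2 1 * g 0 2 - g 0 1 * g 2 2,
                  g 0 1 * g 1 2 - g 1 1 * g 0 2]).det = -1 := by
      rw [Matrix.det_fin_three]
      simp
      linear_combination (4 * (g 0 2 ^ 2 + g 1 2 * g 2 2)) * p1 -
        (2 * g 0 1 * g 0 2 + g 1 1 * g 2 2 + g 2 1 * g 1 2 + 1) * p12
    rw [this]
    exact neg_ne_zero.mpr one_ne_zero
  have hw := Matrix.eq_zero_of_mulVec_eq_zero hP (v := fun i => h i 0 - g i 0) (by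
    ext i
    fin_cases i <;> simp [Matrix.mulVec, dotProduct, Fin.sum_univ_three]
    · linear_combination r10 - p10
    · linear_combination r20 - p20
    · linear_combination hhd - hgd)
  ext i j
  fin_cases j
  · exact sub_eq_zero.mp (congrFun hw i)
  · exact h1 i
  · exact h2 i

/-- Every pair of isotropic vectors with polar pairing `1` arises as the last two columns of some
`conjMat A`. -/
lemma exists_conjMat_columns {K : Type*} [Field K] (u w : Fin 3 → K)
    (hu : qForm u = 0) (hw : qForm w = 0) (huw : qPolar u w = 1) :
    ∃ A : Matrix (Fin 2) (Fin 2) K, A.det ≠ 0 ∧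
      (∀ i, conjMat A i 1 = u i) ∧ (∀ i, conjMat A i 2 = w i) := by
  simp only [qForm, qPolar] at hu hw huw
  by_cases hy : u 1 = 0
  · have hx : u 0 = 0 := by simpa [hy] using hu
    simp only [hx, hy, mul_zero, zero_mul, zero_add] at huw
    have hz : u 2 ≠ 0 := left_ne_zero_of_mul_eq_one huw
    refine ⟨!![0, 1; u 2, -(u 2 * w 0)], by simpa [Matrix.det_fin_two] using hz, ?_, ?_⟩
    · intro i
      fin_cases i <;> simp [conjMat, Matrix.det_fin_two, hx, hy]
      field_simp
    · intro i
      fin_cases i <;> simp [conjMat, Matrix.det_fin_two]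
      · field_simp
      · field_simp
        linear_combination -huw
      · field_simp
        linear_combination -u 2 * hw + w 2 * huw
  · -- Scaling `A` so that `det A = a = u 1` makes the remaining entries polynomial in `u, w`.
    have hdet : (!![u 1, w 0 * u 1 - u 0 * w 1; -u 0, u 0 * w 0 + u 1 * w 2]).det = u 1 := by
      simp [Matrix.det_fin_two]
      linear_combination u 1 * huw - w 1 * hu
    refine ⟨!![u 1, w 0 * u 1 - u 0 * w 1; -u 0, u 0 * w 0 + u 1 * w 2], by rwa [hdet], ?_, ?_⟩
    · intro i
      unfold conjMat
      rw [hdet]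
      fin_cases i <;> simp
      · field_simp
      · field_simp
      · field_simp
        linear_combination -hu
    · intro i
      unfold conjMat
      rw [hdet]
      fin_cases i <;> simp <;> (try rw [← mul_neg]) <;> rw [inv_mul_eq_iff_eq_mul₀ hy]
      · linear_combination -w 0 * w 1 * hu + u 1 * w 0 * huw - u 0 * u 1 * hw
      · linear_combination -u 1 ^ 2 * hw - w 1 ^ 2 * hu + u 1 * w 1 * huw
      · linear_combination u 1 * w 2 * huw + w 0 ^ 2 * hu - u 1 * u 2 * hw

/-- For any field `K`, `PGL₂(K)` is isomorphic to the special orthogonal group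
`SO(K, q)` of the form `q(x,y,z) = x² + yz`: there is an injective homomorphism
`PGL₂(K) → GL₃(K)` whose image is exactly the set of matrices of determinant `1`
preserving `q`; moreover when `char K ≠ 2` it is given by the conjugation action
on trace-zero `2 × 2` matrices. -/
theorem pgl2_iso_SO_q
    (K : Type*) [Field K] :
    ∃ f : PGL2 K →* GL (Fin 3) K,
      Function.Injective f ∧
      (∀ g : GL (Fin 3) K, g ∈ Set.range f ↔
        (Matrix.det (g : Matrix (Fin 3) (Fin 3) K) = 1 ∧
          ∀ v : Fin 3 → K, qForm ((g : Matrix (Fin 3) (Fin 3) K).mulVec v) = qForm v)) ∧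
      ((2 : K) ≠ 0 → ∀ (A : GL (Fin 2) K) (v : Fin 3 → K),
        traceZeroMat (((f (QuotientGroup.mk A) : GL (Fin 3) K) :
            Matrix (Fin 3) (Fin 3) K).mulVec v)
          = (A : Matrix (Fin 2) (Fin 2) K) * traceZeroMat v *
            ((A⁻¹ : GL (Fin 2) K) : Matrix (Fin 2) (Fin 2) K)) := by
  refine ⟨QuotientGroup.lift _ (conjHom K) (ker_conjHom K).ge, ?_, ?_, ?_⟩
  · rw [← MonoidHom.ker_eq_bot_iff, QuotientGroup.ker_lift, ker_conjHom]
    exact QuotientGroup.map_mk'_self _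
  · intro g
    constructor
    · rintro ⟨x, rfl⟩
      induction x using QuotientGroup.induction_on with
      | H A =>
        have hD : (A : Matrix (Fin 2) (Fin 2) K).det ≠ 0 :=
          A.isUnit.map Matrix.detMonoidHom |>.ne_zero
        exact ⟨conjMat_det _ hD, qForm_conjMat _ hD⟩
    · rintro ⟨hdet, hq⟩
      obtain ⟨p1, p2, p12, -, -⟩ := column_relations _ hq
      obtain ⟨A, hA, h1, h2⟩ := exists_conjMat_columns _ _ p1 p2 p12
      refine ⟨QuotientGroup.mk (Matrix.GeneralLinearGroup.mkOfDetNeZero A hA), Units.ext ?_⟩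
      exact first_column_unique _ _ hq (qForm_conjMat A hA) hdet (conjMat_det A hA) h1 h2
  · intro _ A v
    exact traceZeroMat_conjMat A v
end

section
/- Let K be a field of characteristic prime to r with μ_r(K) of order r, generated by ζ. The subgroups D_r(α) ⊆ PGL₂(K) generated by {z ↦ ζz, z ↦ α/z} and D_r(β) generated by {z ↦ ζz, z ↦ β/z} are conjugate in PGL₂(K) if α/β ∈ K*²·μ_r(K). -/
/-!
Write `η = ζ ^ i`. Conjugating `z ↦ a / z` by the dilation `z ↦ z / c` gives
`z ↦ (a / c²) / z = ζ ^ i * b / z`, which is `z ↦ ζ z` iterated `i` times after `z ↦ b / z`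
(`conj_reflection`), while the dilation commutes with `z ↦ ζ z`. So the conjugate of `D_r(a)` is
generated by `t` and `t ^ i * s`, where `t`, `s` generate `D_r(b)`; these two pairs generate the same
subgroup (`closure_pair_pow_mul`).
-/

theorem closure_pair_pow_mul {G : Type*} [Group G] (t s : G) (i : ℕ) :
    Subgroup.closure {t, t ^ i * s} = Subgroup.closure {t, s} := by
  apply le_antisymm <;> rw [Subgroup.closure_le] <;> rintro x (rfl | rfl)
  · exact Subgroup.subset_closure (by simp)
  · exact mul_mem (pow_mem (Subgroup.subset_closure (by simp)) i)
      (Subgroup.subset_closure (by simp))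
  · exact Subgroup.subset_closure (by simp)
  · have h := mul_mem (inv_mem (pow_mem (Subgroup.subset_closure (k := {t, t ^ i * x})
      (by simp : t ∈ _)) i)) (Subgroup.subset_closure (k := {t, t ^ i * x}) (by simp : t ^ i * x ∈ _))
    simpa using h

/-- The dilation `z ↦ z / c`, as the matrix `diag(1, c)`. -/
def dilation {K : Type*} [Field K] (c : Kˣ) : GL (Fin 2) K :=
  Matrix.GeneralLinearGroup.mkOfDetNeZero !![1, 0; 0, (c : K)] (by simp)

/-- Up to the scalar `c`, conjugation by `diag(1, c)` carries `z ↦ a / z` to `z ↦ ζ ^ i * b / z`. -/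
theorem conj_reflection {K : Type*} [Field K] {ζ a b : K} (c : Kˣ) (i : ℕ)
    (h : a = b * (c : K) ^ 2 * ζ ^ i) {T Sa Sb : GL (Fin 2) K}
    (hT : (T : Matrix (Fin 2) (Fin 2) K) = Matrix.diagonal ![ζ, 1])
    (hSa : (Sa : Matrix (Fin 2) (Fin 2) K) = !![0, a; 1, 0])
    (hSb : (Sb : Matrix (Fin 2) (Fin 2) K) = !![0, b; 1, 0]) :
    dilation c * Sa = T ^ i * Sb * dilation c * Matrix.GeneralLinearGroup.scalar (Fin 2) c := by
  apply Units.ext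
  simp only [Units.val_mul, Units.val_pow_eq_pow_val, hT, hSa, hSb, Matrix.diagonal_pow]
  ext p q
  fin_cases p <;> fin_cases q <;>
    simp [dilation, Matrix.mul_apply, Matrix.diagonal_apply,
      Matrix.GeneralLinearGroup.mkOfDetNeZero, h]
  ring


/-- Let `ζ ∈ K` be a primitive `r`-th root of unity (`r` prime to `char K`).  If
`α/β ∈ K*²·μ_r(K)`, then the dihedral subgroups `D_r(α) = ⟨z ↦ ζz, z ↦ α/z⟩` and
`D_r(β) = ⟨z ↦ ζz, z ↦ β/z⟩` of `PGL₂(K)` are conjugate. -/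
theorem dihedral_subgroups_conj_of_square_class
    (K : Type*) [Field K] (r : ℕ) (hr : 2 ≤ r) (hchar : (r : K) ≠ 0)
    (ζ : K) (hζ : IsPrimitiveRoot ζ r)
    (a b : K) (ha : a ≠ 0) (hb : b ≠ 0)
    (hclass : ∃ (c η : K), c ≠ 0 ∧ η ^ r = 1 ∧ a = b * c ^ 2 * η)
    (T Sa Sb : GL (Fin 2) K)
    (hT : (T : Matrix (Fin 2) (Fin 2) K) = Matrix.diagonal ![ζ, 1])
    (hSa : (Sa : Matrix (Fin 2) (Fin 2) K) = !![0, a; 1, 0])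
    (hSb : (Sb : Matrix (Fin 2) (Fin 2) K) = !![0, b; 1, 0]) :
    ∃ g : PGL2 K,
      Subgroup.map (MulAut.conj g).toMonoidHom
          (Subgroup.closure {(QuotientGroup.mk T : PGL2 K), QuotientGroup.mk Sa})
        = Subgroup.closure {(QuotientGroup.mk T : PGL2 K), QuotientGroup.mk Sb} := by
  obtain ⟨c, η, hc, hη, hab⟩ := hclass
  have : NeZero r := ⟨by omega⟩
  obtain ⟨i, -, rfl⟩ := hζ.eq_pow_of_pow_eq_one hη
  lift c to Kˣ using hc.isUnit
  refine ⟨QuotientGroup.mk (dilation c), ?_⟩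
  rw [MonoidHom.map_closure, Set.image_pair]
  have ht : dilation c * T = T * dilation c := by
    apply Units.ext
    simp only [Units.val_mul, hT]
    ext p q
    fin_cases p <;> fin_cases q <;>
      simp [dilation, Matrix.mul_apply, Matrix.diagonal_apply,
        Matrix.GeneralLinearGroup.mkOfDetNeZero]
  have hz : (QuotientGroup.mk (Matrix.GeneralLinearGroup.scalar (Fin 2) c) : PGL2 K) = 1 := by
    rw [QuotientGroup.eq_one_iff, Matrix.GeneralLinearGroup.center_eq_range_scalar]
    exact ⟨c, rfl⟩
  have h1 : (MulAut.conj (QuotientGroup.mk (dilation c) : PGL2 K)).toMonoidHom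
      (QuotientGroup.mk T) = QuotientGroup.mk T := by
    simp only [MulEquiv.toMonoidHom_eq_coe, MonoidHom.coe_coe, MulAut.conj_apply,
      mul_inv_eq_iff_eq_mul, ← QuotientGroup.mk_mul, ht]
  have h2 : (MulAut.conj (QuotientGroup.mk (dilation c) : PGL2 K)).toMonoidHom
      (QuotientGroup.mk Sa) = (QuotientGroup.mk T) ^ i * QuotientGroup.mk Sb := by
    simp only [MulEquiv.toMonoidHom_eq_coe, MonoidHom.coe_coe, MulAut.conj_apply,
      mul_inv_eq_iff_eq_mul]
    rw [← QuotientGroup.mk_mul, conj_reflection c i hab hT hSa hSb, QuotientGroup.mk_mul, hz]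
    simp
  rw [h1, h2, closure_pair_pow_mul]
end
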